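/- (i) For v ∈ {52, 64}, the set {b_v−21, b_v−22, b_v−23, b_v−25} is contained in J_3[v], where b_v = v(v−1)/12. (ii) For v ∈ {88, 100, 112}, the set {b_v−22, b_v−23, b_v−25} is contained in J_3[v]. -/

import Mathlib

/-! The designs come from Wilson's construction with weight 3. Let `(X, 𝓟)` be a pairwise balanced
design on `w` points with blocks of sizes 4 and 5, and let `A`, `A'` be two disjoint blocks of size 4.
On the point set `(X × 3) ∪ {∞}`, of size `v = 3w + 1`, take

* on every block `b ≠ A, A'` a 4-GDD of type `3⁴` or `3⁵` with groups `{x} × 3`, `x ∈ b`;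
* the block `{∞} ∪ ({x} × 3)` for every `x ∉ A ∪ A'`;
* any `S(2,4,13)` on `(A × 3) ∪ {∞}` and any `S(2,4,13)` on `(A' × 3) ∪ {∞}`.

This is an `S(2,4,v)` design, and it has `b_v - 26` blocks outside the two 13-point subdesigns, which
can be varied independently (`flower_of_pbd`). Therefore `a, a' ∈ J₃[13]` gives
`b_v - 26 + a + a' ∈ J₃[v]`. The claim follows with `a' = 0` and `a = 5, 4, 3, 1`, which are shown to
lie in `J₃[13]` by explicit triples of projective planes of order 3, and with pairwise balanced
designs on `w = 17, 21, 29, 33, 37` points for `v = 52, 64, 88, 100, 112`.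

The bookkeeping is done for `K₄`-decompositions of arbitrary graphs: both decompositions and the
triples of decompositions counted by `J₃` can be glued along edge-disjoint graphs (`Flower.sup`). -/

/-- The number of blocks of an `S(2,4,v)` design: `b_v = v(v-1)/12`. -/
def steinerBlockCount (v : ℕ) : ℕ := v * (v - 1) / 12

/-- `B` is the block set of a Steiner system `S(2,4,·)` on the point set `V`:
every block is a 4-element subset of `V` and every pair of distinct points of `V`
lies in exactly one block. -/
def IsS24 {α : Type} [DecidableEq α] (V : Finset α) (B : Finset (Finset α)) : Prop :=
  (∀ b ∈ B, b ⊆ V ∧ b.card = 4) ∧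
  ∀ x y : α, x ∈ V → y ∈ V → x ≠ y → ∃! b, b ∈ B ∧ x ∈ b ∧ y ∈ b

/-- Three block sets have pairwise-coincident intersections. -/
def CoincidentInts {α : Type} [DecidableEq α] (B1 B2 B3 : Finset (Finset α)) : Prop :=
  B1 ∩ B2 = B1 ∩ B3 ∧ B1 ∩ B2 = B2 ∩ B3

/-- `J_3[v]`: the set of `k` such that there exist three `S(2,4,v)` designs on a common
`v`-element point set whose pairwise intersections coincide and have cardinality `k`. -/
def J3 (v : ℕ) : Set ℕ :=
  {k | ∃ B1 B2 B3 : Finset (Finset (Fin v)),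
    IsS24 Finset.univ B1 ∧ IsS24 Finset.univ B2 ∧ IsS24 Finset.univ B3 ∧
    CoincidentInts B1 B2 B3 ∧ (B1 ∩ B2 ∩ B3).card = k}

/-- `I_3[v] = {0,1,...,b_v} \ {b_v-7, ..., b_v-1}`. -/
def I3 (v : ℕ) : Set ℕ :=
  {k | k ≤ steinerBlockCount v} \
    {steinerBlockCount v - 7, steinerBlockCount v - 6, steinerBlockCount v - 5,
     steinerBlockCount v - 4, steinerBlockCount v - 3, steinerBlockCount v - 2,
     steinerBlockCount v - 1}

/-! ### Decompositions of a graph into copies of `K₄` -/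

/-- `B` is the block set of a decomposition of the graph `G` into copies of `K₄`. For `G = ⊤` this is
an `S(2,4,v)` design, for a complete multipartite graph it is a 4-GDD. -/
def IsK4Decomp {α : Type} (G : SimpleGraph α) (B : Finset (Finset α)) : Prop :=
  (∀ b ∈ B, b.card = 4 ∧ ∀ x ∈ b, ∀ y ∈ b, x ≠ y → G.Adj x y) ∧
  ∀ x y : α, G.Adj x y → ∃! b, b ∈ B ∧ x ∈ b ∧ y ∈ b

/-- `G` has three `K₄`-decompositions whose pairwise intersections coincide and have `k` blocks;
this extends `k ∈ J₃[v]` from complete graphs to all graphs. -/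
def Flower {α : Type} [DecidableEq α] (G : SimpleGraph α) (k : ℕ) : Prop :=
  ∃ B1 B2 B3 : Finset (Finset α), IsK4Decomp G B1 ∧ IsK4Decomp G B2 ∧ IsK4Decomp G B3 ∧
    CoincidentInts B1 B2 B3 ∧ (B1 ∩ B2 ∩ B3).card = k

section General

variable {α β : Type}

theorem IsK4Decomp.exists_adj {G : SimpleGraph α} {B : Finset (Finset α)} (h : IsK4Decomp G B)
    {b : Finset α} (hb : b ∈ B) : ∃ x ∈ b, ∃ y ∈ b, x ≠ y ∧ G.Adj x y := by
  obtain ⟨x, hx, y, hy, hxy⟩ := Finset.one_lt_card.mp (by rw [(h.1 b hb).1]; norm_num : 1 < b.card)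
  exact ⟨x, hx, y, hy, hxy, (h.1 b hb).2 x hx y hy hxy⟩

theorem not_adj_of_disjoint {G H : SimpleGraph α} (hd : Disjoint G H) {x y : α} (hG : G.Adj x y)
    (hH : H.Adj x y) : False := by
  have : (G ⊓ H).Adj x y := ⟨hG, hH⟩
  rw [hd.eq_bot] at this
  exact this

theorem disjoint_of_adj {G H : SimpleGraph α} (h : ∀ x y, G.Adj x y → H.Adj x y → False) :
    Disjoint G H := by
  rw [disjoint_iff]
  ext x y
  simpa using fun hG hH => h x y hG hH

theorem finset_sup_adj {ι : Type} (s : Finset ι) (G : ι → SimpleGraph α) (p q : α) :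
    (s.sup G).Adj p q ↔ ∃ i ∈ s, (G i).Adj p q := by
  simp [Finset.sup_eq_iSup, SimpleGraph.iSup_adj]

theorem IsK4Decomp.notMem_of_disjoint {G H : SimpleGraph α} {B C : Finset (Finset α)}
    (hB : IsK4Decomp G B) (hC : IsK4Decomp H C) (hd : Disjoint G H) {b : Finset α} (hb : b ∈ B) :
    b ∉ C := by
  intro hc
  obtain ⟨x, hx, y, hy, hxy, hG⟩ := hB.exists_adj hb
  exact not_adj_of_disjoint hd hG ((hC.1 b hc).2 x hx y hy hxy)

theorem IsK4Decomp.map {G : SimpleGraph α} {B : Finset (Finset α)} (h : IsK4Decomp G B)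
    (f : α ↪ β) : IsK4Decomp (G.map f) (B.map (Finset.mapEmbedding f).toEmbedding) := by
  constructor
  · intro b hb
    obtain ⟨c, hc, rfl⟩ := Finset.mem_map.mp hb
    refine ⟨by simpa using (h.1 c hc).1, ?_⟩
    intro _ hx _ hy hxy
    obtain ⟨x, hx', rfl⟩ := Finset.mem_map.mp hx
    obtain ⟨y, hy', rfl⟩ := Finset.mem_map.mp hy
    exact (SimpleGraph.map_adj _ _ _ _).mpr
      ⟨x, y, (h.1 c hc).2 x hx' y hy' (fun e => hxy (by rw [e])), rfl, rfl⟩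
  · intro _ _ hxy
    obtain ⟨x, y, hG, rfl, rfl⟩ := (SimpleGraph.map_adj _ _ _ _).mp hxy
    obtain ⟨b, ⟨hb, hx, hy⟩, hu⟩ := h.2 x y hG
    refine ⟨b.map f, ⟨Finset.mem_map_of_mem _ hb, Finset.mem_map_of_mem _ hx,
      Finset.mem_map_of_mem _ hy⟩, ?_⟩
    rintro c ⟨hc, hcx, hcy⟩
    obtain ⟨c, hc', rfl⟩ := Finset.mem_map.mp hc
    rw [hu c ⟨hc', (Finset.mem_map' f).mp hcx, (Finset.mem_map' f).mp hcy⟩]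
    rfl

variable [DecidableEq α] [DecidableEq β]

theorem isS24_univ_iff [Fintype α] (B : Finset (Finset α)) :
    IsS24 Finset.univ B ↔ IsK4Decomp (⊤ : SimpleGraph α) B := by
  simp [IsS24, IsK4Decomp]

theorem mem_J3_iff (v k : ℕ) : k ∈ J3 v ↔ Flower (⊤ : SimpleGraph (Fin v)) k := by
  simp only [J3, Flower, Set.mem_ofPred_eq, isS24_univ_iff]

theorem IsK4Decomp.flower {G : SimpleGraph α} {B : Finset (Finset α)} (h : IsK4Decomp G B) :
    Flower G B.card :=
  ⟨B, B, B, h, h, h, ⟨rfl, rfl⟩, by simp⟩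

theorem IsK4Decomp.union {G H : SimpleGraph α} {B C : Finset (Finset α)}
    (hB : IsK4Decomp G B) (hC : IsK4Decomp H C) (hd : Disjoint G H) :
    IsK4Decomp (G ⊔ H) (B ∪ C) := by
  constructor
  · intro b hb
    rcases Finset.mem_union.mp hb with hb | hb
    · exact ⟨(hB.1 b hb).1, fun x hx y hy hxy => Or.inl ((hB.1 b hb).2 x hx y hy hxy)⟩
    · exact ⟨(hC.1 b hb).1, fun x hx y hy hxy => Or.inr ((hC.1 b hb).2 x hx y hy hxy)⟩
  · rintro x y (hG | hH)
    · obtain ⟨b, ⟨hb, hx, hy⟩, hu⟩ := hB.2 x y hG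
      refine ⟨b, ⟨Finset.mem_union_left _ hb, hx, hy⟩, ?_⟩
      rintro c ⟨hc, hcx, hcy⟩
      rcases Finset.mem_union.mp hc with hc | hc
      · exact hu c ⟨hc, hcx, hcy⟩
      · exact (not_adj_of_disjoint hd hG ((hC.1 c hc).2 x hcx y hcy hG.ne)).elim
    · obtain ⟨b, ⟨hb, hx, hy⟩, hu⟩ := hC.2 x y hH
      refine ⟨b, ⟨Finset.mem_union_right _ hb, hx, hy⟩, ?_⟩
      rintro c ⟨hc, hcx, hcy⟩
      rcases Finset.mem_union.mp hc with hc | hc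
      · exact (not_adj_of_disjoint hd ((hB.1 c hc).2 x hcx y hcy hH.ne) hH).elim
      · exact hu c ⟨hc, hcx, hcy⟩

theorem union_inter_union_of_disjoint {γ : Type} [DecidableEq γ] {B1 B2 C1 C2 : Finset γ}
    (h12 : ∀ b ∈ B1, b ∉ C2) (h21 : ∀ b ∈ B2, b ∉ C1) :
    (B1 ∪ C1) ∩ (B2 ∪ C2) = (B1 ∩ B2) ∪ (C1 ∩ C2) := by
  ext b
  have := h12 b
  have := h21 b
  simp only [Finset.mem_inter, Finset.mem_union]
  tauto

/-- Flowers on edge-disjoint graphs can be glued. -/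
theorem Flower.sup {G H : SimpleGraph α} {k l : ℕ} (hG : Flower G k) (hH : Flower H l)
    (hd : Disjoint G H) : Flower (G ⊔ H) (k + l) := by
  obtain ⟨B1, B2, B3, hB1, hB2, hB3, ⟨e1, e2⟩, hk⟩ := hG
  obtain ⟨C1, C2, C3, hC1, hC2, hC3, ⟨f1, f2⟩, hl⟩ := hH
  have d : ∀ {B C : Finset (Finset α)}, IsK4Decomp G B → IsK4Decomp H C → ∀ b ∈ B, b ∉ C :=
    fun hB hC b hb => hB.notMem_of_disjoint hC hd hb
  have i12 := union_inter_union_of_disjoint (d hB1 hC2) (d hB2 hC1)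
  have i13 := union_inter_union_of_disjoint (d hB1 hC3) (d hB3 hC1)
  have i23 := union_inter_union_of_disjoint (d hB2 hC3) (d hB3 hC2)
  refine ⟨B1 ∪ C1, B2 ∪ C2, B3 ∪ C3, hB1.union hC1 hd, hB2.union hC2 hd, hB3.union hC3 hd,
    ⟨by rw [i12, i13, e1, f1], by rw [i12, i23, e2, f2]⟩, ?_⟩
  rw [i12, union_inter_union_of_disjoint
    (fun b hb => d hB1 hC3 b (Finset.mem_inter.mp hb).1)
    (fun b hb hc => d hB3 hC1 b hb (Finset.mem_inter.mp hc).1),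
    Finset.card_union_of_disjoint, hk, hl]
  rw [Finset.disjoint_left]
  intro b hb hc
  simp only [Finset.mem_inter] at hb hc
  exact d hB1 hC1 b hb.1.1 hc.1.1

theorem Flower.bot : Flower (⊥ : SimpleGraph α) 0 := by
  have h : IsK4Decomp (⊥ : SimpleGraph α) ∅ := by simp [IsK4Decomp]
  exact h.flower

theorem Flower.finset_sup {ι : Type} [DecidableEq ι] (s : Finset ι) (G : ι → SimpleGraph α)
    (k : ι → ℕ) (hd : ∀ i ∈ s, ∀ j ∈ s, i ≠ j → Disjoint (G i) (G j))
    (hG : ∀ i ∈ s, Flower (G i) (k i)) : Flower (s.sup G) (∑ i ∈ s, k i) := by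
  induction s using Finset.induction_on with
  | empty => simpa using Flower.bot
  | insert i s hi ih =>
    rw [Finset.sup_insert, Finset.sum_insert hi]
    refine (hG i (Finset.mem_insert_self i s)).sup (ih ?_ ?_) ?_
    · exact fun a ha b hb => hd a (Finset.mem_insert_of_mem ha) b (Finset.mem_insert_of_mem hb)
    · exact fun a ha => hG a (Finset.mem_insert_of_mem ha)
    · rw [Finset.disjoint_sup_right]
      intro j hj
      exact hd i (Finset.mem_insert_self i s) j (Finset.mem_insert_of_mem hj)
        (fun h => hi (h ▸ hj))

theorem Flower.map {G : SimpleGraph α} {k : ℕ} (h : Flower G k) (f : α ↪ β) :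
    Flower (G.map f) k := by
  obtain ⟨B1, B2, B3, hB1, hB2, hB3, ⟨e1, e2⟩, hk⟩ := h
  refine ⟨_, _, _, hB1.map f, hB2.map f, hB3.map f, ⟨?_, ?_⟩, ?_⟩
  · rw [← Finset.map_inter, ← Finset.map_inter, e1]
  · rw [← Finset.map_inter, ← Finset.map_inter, e2]
  · rw [← Finset.map_inter, ← Finset.map_inter, Finset.card_map, hk]

theorem Flower.top_of_equiv {k : ℕ} (h : Flower (⊤ : SimpleGraph α) k) (e : α ≃ β) :
    Flower (⊤ : SimpleGraph β) k := by
  have := h.map e.toEmbedding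
  convert this
  ext x y
  rw [SimpleGraph.map_adj]
  constructor
  · exact fun hxy => ⟨e.symm x, e.symm y, fun h => hxy (e.symm.injective h), by simp, by simp⟩
  · rintro ⟨u, v, huv, rfl, rfl⟩
    exact fun h => huv (e.injective h)

end General

/-! ### Block sets given by lists of numbers -/

section Lists

variable {w : ℕ}

/-- The subset of `Fin w` listed in `l`. -/
def listBlock (w : ℕ) (l : List ℕ) : Finset (Fin w) := Finset.univ.filter fun x => (x : ℕ) ∈ l

/-- Every member of `L` is an increasing list of numbers below `w`. -/
def IsBlockList (w : ℕ) (L : List (List ℕ)) : Prop :=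
  ∀ l ∈ L, (List.range w).filter (fun x => l.elem x) = l

/-- Two points `x ≠ y` below `w` lie in exactly one member of `L` if `g x y`, and in none otherwise. -/
def PairsCovered (w : ℕ) (g : ℕ → ℕ → Bool) (L : List (List ℕ)) : Prop :=
  ∀ x ∈ List.range w, ∀ y ∈ List.range w, x ≠ y →
    ((L.filter fun l => l.elem x).filter fun l => l.elem y).length = if g x y then 1 else 0

instance (w : ℕ) (L : List (List ℕ)) : Decidable (IsBlockList w L) :=
  inferInstanceAs (Decidable (∀ l ∈ L, _))

instance (w : ℕ) (g : ℕ → ℕ → Bool) (L : List (List ℕ)) : Decidable (PairsCovered w g L) :=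
  inferInstanceAs (Decidable (∀ x ∈ List.range w, ∀ y ∈ List.range w, x ≠ y → _))

theorem mem_listBlock {l : List ℕ} {x : Fin w} : x ∈ listBlock w l ↔ (x : ℕ) ∈ l := by
  simp [listBlock]

theorem IsBlockList.lt {L : List (List ℕ)} (h : IsBlockList w L) {l : List ℕ} (hl : l ∈ L) {x : ℕ}
    (hx : x ∈ l) : x < w := by
  rw [← h l hl] at hx
  simpa using (List.mem_filter.mp hx).1

theorem IsBlockList.card_listBlock {L : List (List ℕ)} (h : IsBlockList w L) {l : List ℕ}
    (hl : l ∈ L) : (listBlock w l).card = l.length := by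
  have hn : l.Nodup := by
    rw [← h l hl]
    exact List.nodup_range.filter _
  rw [← List.toFinset_card_of_nodup hn, ← Finset.card_map Fin.valEmbedding]
  congr 1
  ext x
  simp only [Finset.mem_map, mem_listBlock, Fin.valEmbedding_apply, List.mem_toFinset]
  constructor
  · rintro ⟨y, hy, rfl⟩
    exact hy
  · exact fun hx => ⟨⟨x, h.lt hl hx⟩, hx, rfl⟩

theorem IsBlockList.injOn {L : List (List ℕ)} (h : IsBlockList w L) :
    Set.InjOn (listBlock w) {l | l ∈ L} := by
  intro l hl m hm e
  rw [← h l hl, ← h m hm]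
  apply List.filter_congr
  intro x hx
  have := congrArg (fun s => (⟨x, List.mem_range.mp hx⟩ : Fin w) ∈ s) e
  simpa [mem_listBlock] using this

theorem PairsCovered.existsUnique {g : ℕ → ℕ → Bool} {L : List (List ℕ)} (h : PairsCovered w g L)
    {x y : Fin w} (hxy : x ≠ y) (hg : g x y = true) :
    ∃! l, l ∈ L ∧ x ∈ listBlock w l ∧ y ∈ listBlock w l := by
  have h1 := h x (by simp) y (by simp) (fun e => hxy (Fin.ext e))
  rw [hg, if_pos rfl] at h1
  obtain ⟨b, hb⟩ := List.length_eq_one_iff.mp h1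
  have hm : ∀ l, l ∈ L ∧ x ∈ listBlock w l ∧ y ∈ listBlock w l ↔ l = b := fun l => by
    rw [← List.mem_singleton, ← hb]
    simp only [mem_listBlock, List.mem_filter, List.elem_eq_mem, decide_eq_true_eq]
    tauto
  exact ⟨b, (hm b).mpr rfl, fun l hl => (hm l).mp hl⟩

theorem PairsCovered.imp {g : ℕ → ℕ → Bool} {L : List (List ℕ)} (h : PairsCovered w g L)
    {x y : Fin w} (hxy : x ≠ y) {l : List ℕ} (hl : l ∈ L) (hx : x ∈ listBlock w l)
    (hy : y ∈ listBlock w l) : g x y = true := by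
  by_contra hg
  have h1 := h x (by simp) y (by simp) (fun e => hxy (Fin.ext e))
  rw [if_neg hg, List.length_eq_zero_iff, List.filter_eq_nil_iff] at h1
  rw [mem_listBlock] at hx hy
  exact h1 l (by simp [hl, hx]) (by simpa using hy)

theorem isK4Decomp_of_list {G : SimpleGraph (Fin w)} {g : ℕ → ℕ → Bool} {L : List (List ℕ)}
    (hL : IsBlockList w L) (h4 : ∀ l ∈ L, l.length = 4) (hg : PairsCovered w g L)
    (hG : ∀ x y : Fin w, G.Adj x y ↔ x ≠ y ∧ g x y = true) :
    IsK4Decomp G (L.toFinset.image (listBlock w)) := by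
  constructor
  · intro b hb
    obtain ⟨l, hl, rfl⟩ := Finset.mem_image.mp hb
    rw [List.mem_toFinset] at hl
    refine ⟨(hL.card_listBlock hl).trans (h4 l hl), fun x hx y hy hxy => ?_⟩
    exact (hG x y).mpr ⟨hxy, hg.imp hxy hl hx hy⟩
  · intro x y hxy
    obtain ⟨hne, hgxy⟩ := (hG x y).mp hxy
    obtain ⟨l, ⟨hl, hx, hy⟩, hu⟩ := hg.existsUnique hne hgxy
    refine ⟨listBlock w l, ⟨Finset.mem_image_of_mem _ (List.mem_toFinset.mpr hl), hx, hy⟩, ?_⟩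
    rintro b ⟨hb, hbx, hby⟩
    obtain ⟨m, hm, rfl⟩ := Finset.mem_image.mp hb
    rw [hu m ⟨List.mem_toFinset.mp hm, hbx, hby⟩]

theorem flower_of_list {G : SimpleGraph (Fin w)} (g : ℕ → ℕ → Bool) (L : List (List ℕ))
    (hL : IsBlockList w L ∧ L.Nodup) (h4 : ∀ l ∈ L, l.length = 4) (hg : PairsCovered w g L)
    (hG : ∀ x y : Fin w, G.Adj x y ↔ x ≠ y ∧ g x y = true) : Flower G L.length := by
  have h := (isK4Decomp_of_list hL.1 h4 hg hG).flower
  rwa [Finset.card_image_of_injOn (fun l hl m hm => hL.1.injOn (List.mem_toFinset.mp hl)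
    (List.mem_toFinset.mp hm)), List.toFinset_card_of_nodup hL.2] at h

/-- Three designs given by a common part `C` and three tails, disjoint from each other. -/
theorem mem_J3_of_lists {v : ℕ} (C T1 T2 T3 : List (List ℕ))
    (hL : IsBlockList v (C ++ T1 ++ T2 ++ T3)) (h4 : ∀ l ∈ C ++ T1 ++ T2 ++ T3, l.length = 4)
    (hC : C.Nodup)
    (h1 : PairsCovered v (fun _ _ => true) (C ++ T1))
    (h2 : PairsCovered v (fun _ _ => true) (C ++ T2))
    (h3 : PairsCovered v (fun _ _ => true) (C ++ T3))
    (d : (T1 ++ T2).all (fun l => !T3.elem l) ∧ T1.all (fun l => !T2.elem l)) :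
    C.length ∈ J3 v := by
  simp only [List.all_eq_true, List.mem_append, Bool.not_eq_true', List.elem_eq_mem,
    decide_eq_false_iff_not] at d
  obtain ⟨d3, d2⟩ := d
  have key : ∀ T, (∀ l ∈ T, l ∈ C ++ T1 ++ T2 ++ T3) → PairsCovered v (fun _ _ => true) (C ++ T) →
      IsK4Decomp (⊤ : SimpleGraph (Fin v)) ((C ++ T).toFinset.image (listBlock v)) := by
    intro T hT hp
    have hsub : ∀ l ∈ C ++ T, l ∈ C ++ T1 ++ T2 ++ T3 := by
      intro l hl
      rcases List.mem_append.mp hl with hl | hl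
      · simp [hl]
      · exact hT l hl
    exact isK4Decomp_of_list (fun l hl => hL l (hsub l hl)) (fun l hl => h4 l (hsub l hl)) hp
      (by simp)
  have inter : ∀ T T', (∀ l ∈ T, l ∈ C ++ T1 ++ T2 ++ T3) → (∀ l ∈ T', l ∈ C ++ T1 ++ T2 ++ T3) →
      (∀ l ∈ T, l ∉ T') → (C ++ T).toFinset.image (listBlock v) ∩
        (C ++ T').toFinset.image (listBlock v) = C.toFinset.image (listBlock v) := by
    intro T T' hT hT' hd
    rw [← Finset.image_inter_of_injOn]
    · congr 1
      ext l
      have := hd l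
      simp only [Finset.mem_inter, List.mem_toFinset, List.mem_append]
      tauto
    · refine hL.injOn.mono ?_
      rintro l (hl | hl)
      · rcases List.mem_append.mp (List.mem_toFinset.mp hl) with hl | hl
        · simp [hl]
        · exact hT l hl
      · rcases List.mem_append.mp (List.mem_toFinset.mp hl) with hl | hl
        · simp [hl]
        · exact hT' l hl
  have m1 : ∀ l ∈ T1, l ∈ C ++ T1 ++ T2 ++ T3 := fun l hl => by simp [hl]
  have m2 : ∀ l ∈ T2, l ∈ C ++ T1 ++ T2 ++ T3 := fun l hl => by simp [hl]
  have m3 : ∀ l ∈ T3, l ∈ C ++ T1 ++ T2 ++ T3 := fun l hl => by simp [hl]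
  have i12 := inter T1 T2 m1 m2 d2
  have i13 := inter T1 T3 m1 m3 (fun l hl => d3 l (Or.inl hl))
  have i23 := inter T2 T3 m2 m3 (fun l hl => d3 l (Or.inr hl))
  rw [mem_J3_iff]
  refine ⟨_, _, _, key T1 m1 h1, key T2 m2 h2, key T3 m3 h3,
    ⟨i12.trans i13.symm, i12.trans i23.symm⟩, ?_⟩
  rw [i12, Finset.inter_eq_left.mpr, Finset.card_image_of_injOn, List.toFinset_card_of_nodup hC]
  · refine hL.injOn.mono ?_
    intro l hl
    simp [List.mem_toFinset.mp hl]
  · rw [List.toFinset_append, Finset.image_union]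
    exact Finset.subset_union_left

end Lists

/-! ### Tripling a pairwise balanced design -/

section Tripling

variable {w : ℕ}

/-- The complete multipartite graph with parts `{x} × Fin 3`, `x ∈ b`, inside the point set
`(Fin w × Fin 3) ∪ {∞}`, where `∞` is `none`. -/
def blowUp (b : Finset (Fin w)) : SimpleGraph (Option (Fin w × Fin 3)) where
  Adj p q := ∃ x ∈ b, ∃ y ∈ b, x ≠ y ∧ ∃ i j, p = some (x, i) ∧ q = some (y, j)
  symm := ⟨by
    rintro p q ⟨x, hx, y, hy, hxy, i, j, hp, hq⟩
    exact ⟨y, hy, x, hx, hxy.symm, j, i, hq, hp⟩⟩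
  loopless := ⟨by
    rintro p ⟨x, hx, y, hy, hxy, i, j, hp, hq⟩
    rw [hp] at hq
    simp only [Option.some.injEq, Prod.mk.injEq] at hq
    exact hxy hq.1⟩

/-- The complete graph on `(b × Fin 3) ∪ {∞}`. -/
def coneOn (b : Finset (Fin w)) : SimpleGraph (Option (Fin w × Fin 3)) where
  Adj p q := p ≠ q ∧ (∀ u ∈ p, u.1 ∈ b) ∧ (∀ u ∈ q, u.1 ∈ b)
  symm := ⟨fun _ _ h => ⟨h.1.symm, h.2.2, h.2.1⟩⟩
  loopless := ⟨fun _ h => h.1 rfl⟩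

theorem coneOn_disjoint {b c : Finset (Fin w)} (h : Disjoint b c) :
    Disjoint (coneOn b) (coneOn c) := by
  rw [Finset.disjoint_left] at h
  apply disjoint_of_adj
  rintro (_ | p) (_ | q) ⟨hne, hp, hq⟩ ⟨-, hp', hq'⟩
  · exact hne rfl
  · exact h (hq q rfl) (hq' q rfl)
  · exact h (hp p rfl) (hp' p rfl)
  · exact h (hp p rfl) (hp' p rfl)

theorem coneOn_disjoint_blowUp {b c : Finset (Fin w)}
    (h : ∀ x y, x ≠ y → x ∈ b → y ∈ b → x ∈ c → y ∈ c → False) :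
    Disjoint (coneOn b) (blowUp c) := by
  apply disjoint_of_adj
  rintro _ _ ⟨-, hp, hq⟩ ⟨x, hx, y, hy, hxy, i, j, rfl, rfl⟩
  exact h x y hxy (hp _ rfl) (hq _ rfl) hx hy

theorem blowUp_disjoint {b c : Finset (Fin w)}
    (h : ∀ x y, x ≠ y → x ∈ b → y ∈ b → x ∈ c → y ∈ c → False) :
    Disjoint (blowUp b) (blowUp c) := by
  apply disjoint_of_adj
  rintro _ _ ⟨x, hx, y, hy, hxy, i, j, rfl, rfl⟩ ⟨x', hx', y', hy', -, i', j', hp, hq⟩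
  simp only [Option.some.injEq, Prod.mk.injEq] at hp hq
  obtain ⟨rfl, -⟩ := hp
  obtain ⟨rfl, -⟩ := hq
  exact h x y hxy hx hy hx' hy'

theorem flower_coneOn {b : Finset (Fin w)} {v k : ℕ} (hv : 3 * b.card + 1 = v) (hk : k ∈ J3 v) :
    Flower (coneOn b) k := by
  have hcard : Fintype.card (Option (b × Fin 3)) = v := by simp; omega
  have h := (((mem_J3_iff v k).mp hk).top_of_equiv (Fintype.equivFinOfCardEq hcard).symm).map
    ((Function.Embedding.subtype (· ∈ b)).prodMap (Function.Embedding.refl (Fin 3))).optionMap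
  convert h
  ext p q
  rw [SimpleGraph.map_adj]
  constructor
  · rintro ⟨hne, hp, hq⟩
    have lift : ∀ r : Option (Fin w × Fin 3), (∀ u ∈ r, u.1 ∈ b) → ∃ r' : Option (b × Fin 3),
        ((Function.Embedding.subtype (· ∈ b)).prodMap
          (Function.Embedding.refl (Fin 3))).optionMap r' = r := by
      rintro (_ | ⟨x, i⟩) hr
      · exact ⟨none, rfl⟩
      · exact ⟨some (⟨x, hr _ rfl⟩, i), rfl⟩
    obtain ⟨p', rfl⟩ := lift p hp
    obtain ⟨q', rfl⟩ := lift q hq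
    exact ⟨p', q', fun e => hne (by rw [e]), rfl, rfl⟩
  · rintro ⟨p', q', hne, rfl, rfl⟩
    refine ⟨fun e => hne (Function.Embedding.injective _ e), ?_, ?_⟩
    · rcases p' with _ | ⟨x, i⟩ <;> simp
    · rcases q' with _ | ⟨x, i⟩ <;> simp

/-- The complete multipartite graph with `n` parts of size 3; the parts are the fibres of `Fin.divNat`,
that is, of division by 3. -/
def multi (n : ℕ) : SimpleGraph (Fin (n * 3)) where
  Adj p q := p.divNat ≠ q.divNat
  symm := ⟨fun _ _ h => Ne.symm h⟩
  loopless := ⟨fun _ h => h rfl⟩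

theorem flower_blowUp {b : Finset (Fin w)} {n k : ℕ} (hn : b.card = n) (h : Flower (multi n) k) :
    Flower (blowUp b) k := by
  let e : Fin n ≃ b := (b.equivFinOfCardEq hn).symm
  have key : ∀ u : Fin n × Fin 3, (finProdFinEquiv u).divNat = u.1 := fun u =>
    congrArg Prod.fst (finProdFinEquiv.symm_apply_apply u)
  have h' := h.map (finProdFinEquiv.symm.toEmbedding.trans
    (((e.toEmbedding.trans (Function.Embedding.subtype (· ∈ b))).prodMap
      (Function.Embedding.refl (Fin 3))).trans Function.Embedding.some))
  convert h'
  ext p q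
  rw [SimpleGraph.map_adj]
  constructor
  · rintro ⟨x, hx, y, hy, hxy, i, j, rfl, rfl⟩
    refine ⟨finProdFinEquiv (e.symm ⟨x, hx⟩, i), finProdFinEquiv (e.symm ⟨y, hy⟩, j), ?_, ?_, ?_⟩
    · intro h
      rw [key, key] at h
      exact hxy (congrArg Subtype.val (e.symm.injective h))
    · rw [Function.Embedding.trans_apply, Equiv.coe_toEmbedding, Equiv.symm_apply_apply]
      simp
    · rw [Function.Embedding.trans_apply, Equiv.coe_toEmbedding, Equiv.symm_apply_apply]
      simp
  · rintro ⟨x, y, hxy, rfl, rfl⟩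
    exact ⟨e x.divNat, (e _).2, e y.divNat, (e _).2,
      fun h => hxy (e.injective (Subtype.ext h)), x.modNat, y.modNat, rfl, rfl⟩

/-- The transversal design `TD(4,3)`, that is, a 4-GDD of type `3⁴` with 9 blocks
`{(0, i), (1, j), (2, i + j), (3, i + 2j)}`; the point `(c, x)` is written `3c + x`. -/
theorem flower_multi_four : Flower (multi 4) 9 := by
  refine flower_of_list (fun x y => x / 3 != y / 3)
    [[0, 3, 6, 9], [0, 4, 7, 11], [0, 5, 8, 10], [1, 3, 7, 10], [1, 4, 8, 9], [1, 5, 6, 11],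
     [2, 3, 8, 11], [2, 4, 6, 10], [2, 5, 7, 9]]
    (by decide +kernel) (by decide +kernel) (by decide +kernel) ?_
  intro x y
  simp only [multi, ne_eq, Fin.ext_iff, Fin.coe_divNat, bne_iff_ne]
  exact ⟨fun h => ⟨fun e => h (by rw [e]), h⟩, fun h => h.2⟩

/-- A 4-GDD of type `3⁵` with 15 blocks: the affine plane of order 4 without a point. It is the
development of the relative difference set `{0, 1, 3, 7}` in `ℤ₁₅ ≅ ℤ₅ × ℤ₃`; the point `(c, x)` is
written `3c + x`. -/
theorem flower_multi_five : Flower (multi 5) 15 := by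
  refine flower_of_list (fun x y => x / 3 != y / 3)
    [[0, 4, 7, 9], [4, 8, 11, 13], [2, 8, 9, 12], [1, 3, 9, 13], [2, 5, 7, 13], [2, 3, 6, 11],
     [3, 7, 10, 12], [1, 7, 11, 14], [0, 5, 11, 12], [1, 4, 6, 12], [1, 5, 8, 10], [5, 6, 9, 14],
     [0, 6, 10, 13], [2, 4, 10, 14], [0, 3, 8, 14]]
    (by decide +kernel) (by decide +kernel) (by decide +kernel) ?_
  intro x y
  simp only [multi, ne_eq, Fin.ext_iff, Fin.coe_divNat, bne_iff_ne]
  exact ⟨fun h => ⟨fun e => h (by rw [e]), h⟩, fun h => h.2⟩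

theorem one_mem_J3_four : 1 ∈ J3 4 :=
  (mem_J3_iff 4 1).mpr (flower_of_list (fun _ _ => true) [[0, 1, 2, 3]] (by decide) (by decide)
    (by decide) (by simp))

/-- The number of blocks in the 4-GDD of type `3ⁿ` for `n = 4, 5`. -/
def gddBlocks (n : ℕ) : ℕ := if n = 4 then 9 else 15

/-- Wilson's construction with weight 3. In a pairwise balanced design on `w` points with blocks of
sizes 4 and 5, two disjoint blocks `A`, `A'` of size 4 become two 13-point subdesigns that share
only `∞`; they are filled independently. -/
theorem flower_of_pbd {ι : Type} [DecidableEq ι] (s : Finset ι) (blk : ι → Finset (Fin w))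
    (hcard : ∀ i ∈ s, (blk i).card = 4 ∨ (blk i).card = 5)
    (hpair : ∀ x y, x ≠ y → ∃! i, i ∈ s ∧ x ∈ blk i ∧ y ∈ blk i)
    {A A' : ι} (hA : A ∈ s) (hA' : A' ∈ s) (hA4 : (blk A).card = 4) (hA4' : (blk A').card = 4)
    (hdisj : Disjoint (blk A) (blk A')) {a a' : ℕ} (ha : a ∈ J3 13) (ha' : a' ∈ J3 13) :
    Flower (⊤ : SimpleGraph (Option (Fin w × Fin 3)))
      (a + a' + ∑ i ∈ (s.erase A).erase A', gddBlocks (blk i).card + (w - 8)) := by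
  have huniq : ∀ i ∈ s, ∀ j ∈ s, i ≠ j → ∀ x y, x ≠ y → x ∈ blk i → y ∈ blk i → x ∈ blk j →
      y ∈ blk j → False := fun i hi j hj hij x y hxy h1 h2 h3 h4 =>
    hij ((hpair x y hxy).unique ⟨hi, h1, h2⟩ ⟨hj, h3, h4⟩)
  set s' := (s.erase A).erase A' with hs'
  have mem_s' : ∀ i, i ∈ s' ↔ i ≠ A' ∧ i ≠ A ∧ i ∈ s := fun i => by simp [hs']
  set rest : Finset (Fin w) := (blk A ∪ blk A')ᶜ with hrest
  have mem_rest : ∀ x, x ∈ rest ↔ x ∉ blk A ∧ x ∉ blk A' := fun x => by simp [hrest]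
  have hrest_card : rest.card = w - 8 := by
    rw [hrest, Finset.card_compl, Finset.card_union_of_disjoint hdisj, hA4, hA4', Fintype.card_fin]
  have f1 : Flower (coneOn (blk A)) a := flower_coneOn (by rw [hA4]) ha
  have f2 : Flower (coneOn (blk A')) a' := flower_coneOn (by rw [hA4']) ha'
  have f3 : Flower (s'.sup fun i => blowUp (blk i)) (∑ i ∈ s', gddBlocks (blk i).card) := by
    refine Flower.finset_sup _ _ _ ?_ ?_
    · intro i hi j hj hij
      exact blowUp_disjoint (huniq i ((mem_s' i).mp hi).2.2 j ((mem_s' j).mp hj).2.2 hij)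
    · intro i hi
      rcases hcard i ((mem_s' i).mp hi).2.2 with h | h
      · exact flower_blowUp h (by rw [h]; exact flower_multi_four)
      · exact flower_blowUp h (by rw [h]; exact flower_multi_five)
  have f4 : Flower (rest.sup fun x => coneOn {x}) (w - 8) := by
    have := Flower.finset_sup rest (fun x => coneOn {x}) (fun _ => 1)
      (fun x _ y _ hxy => coneOn_disjoint (by simpa using hxy))
      (fun x _ => flower_coneOn (by simp) one_mem_J3_four)
    simpa [hrest_card] using this
  have htop : (⊤ : SimpleGraph (Option (Fin w × Fin 3))) =
      coneOn (blk A) ⊔ coneOn (blk A') ⊔ (s'.sup fun i => blowUp (blk i)) ⊔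
        (rest.sup fun x => coneOn {x}) := by
    ext p q
    simp only [SimpleGraph.top_adj, SimpleGraph.sup_adj, finset_sup_adj]
    constructor
    · intro hpq
      -- two points over the same `x`, or `∞` and a point over `x`
      have hsame : ∀ x, (∀ u ∈ p, u.1 = x) → (∀ u ∈ q, u.1 = x) →
          (((coneOn (blk A)).Adj p q ∨ (coneOn (blk A')).Adj p q) ∨
            ∃ i ∈ s', (blowUp (blk i)).Adj p q) ∨ ∃ y ∈ rest, (coneOn {y}).Adj p q := by
        intro x hp hq
        by_cases hx : x ∈ blk A
        · exact Or.inl (Or.inl (Or.inl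
            ⟨hpq, fun u hu => hp u hu ▸ hx, fun u hu => hq u hu ▸ hx⟩))
        by_cases hx' : x ∈ blk A'
        · exact Or.inl (Or.inl (Or.inr
            ⟨hpq, fun u hu => hp u hu ▸ hx', fun u hu => hq u hu ▸ hx'⟩))
        · exact Or.inr ⟨x, (mem_rest x).mpr ⟨hx, hx'⟩, hpq, fun u hu => by simp [hp u hu],
            fun u hu => by simp [hq u hu]⟩
      rcases p with _ | ⟨x, i⟩ <;> rcases q with _ | ⟨y, j⟩
      · exact (hpq rfl).elim
      · exact hsame y (by simp) (by simp)
      · exact hsame x (by simp) (by simp)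
      · by_cases hxy : x = y
        · subst hxy
          exact hsame x (by simp) (by simp)
        obtain ⟨c, ⟨hc, hcx, hcy⟩, -⟩ := hpair x y hxy
        left
        by_cases hcA : c = A
        · subst hcA
          exact Or.inl (Or.inl ⟨hpq, by simpa using hcx, by simpa using hcy⟩)
        by_cases hcA' : c = A'
        · subst hcA'
          exact Or.inl (Or.inr ⟨hpq, by simpa using hcx, by simpa using hcy⟩)
        · exact Or.inr ⟨c, (mem_s' c).mpr ⟨hcA', hcA, hc⟩, x, hcx, y, hcy, hxy, i, j, rfl, rfl⟩
    · rintro (((h | h) | ⟨_, _, h⟩) | ⟨_, _, h⟩) <;> exact h.ne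
  rw [htop]
  refine ((f1.sup f2 (coneOn_disjoint hdisj)).sup f3 ?_).sup f4 ?_
  · rw [Finset.disjoint_sup_right]
    intro i hi
    obtain ⟨hi1, hi2, his⟩ := (mem_s' i).mp hi
    rw [disjoint_sup_left]
    exact ⟨coneOn_disjoint_blowUp (huniq A hA i his hi2.symm),
      coneOn_disjoint_blowUp (huniq A' hA' i his hi1.symm)⟩
  · rw [Finset.disjoint_sup_right]
    intro x hx
    obtain ⟨hx1, hx2⟩ := (mem_rest x).mp hx
    rw [disjoint_sup_left, disjoint_sup_left, Finset.disjoint_sup_left]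
    refine ⟨⟨coneOn_disjoint (by simpa using hx1), coneOn_disjoint (by simpa using hx2)⟩, ?_⟩
    intro i hi
    refine (coneOn_disjoint_blowUp ?_).symm
    intro y z hyz hy hz _ _
    rw [Finset.mem_singleton] at hy hz
    exact hyz (hy.trans hz.symm)

end Tripling

/-! ### Three designs on 13 points -/

/-- The developments of `{0, 1, 3, 9}`, twice it and four times it in `ℤ₁₃` are three disjoint
projective planes of order 3. -/
theorem zero_mem_J3_thirteen : 0 ∈ J3 13 :=
  mem_J3_of_lists
    []
    [[0, 1, 3, 9], [0, 2, 8, 12], [0, 4, 5, 7], [0, 6, 10, 11], [1, 2, 4, 10], [1, 5, 6, 8],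
     [1, 7, 11, 12], [2, 3, 5, 11], [2, 6, 7, 9], [3, 4, 6, 12], [3, 7, 8, 10], [4, 8, 9, 11],
     [5, 9, 10, 12]]
    [[0, 1, 8, 10], [0, 2, 5, 6], [0, 3, 4, 11], [0, 7, 9, 12], [1, 2, 9, 11], [1, 3, 6, 7],
     [1, 4, 5, 12], [2, 3, 10, 12], [2, 4, 7, 8], [3, 5, 8, 9], [4, 6, 9, 10], [5, 7, 10, 11],
     [6, 8, 11, 12]]
    [[0, 1, 5, 11], [0, 2, 3, 7], [0, 4, 10, 12], [0, 6, 8, 9], [1, 2, 6, 12], [1, 3, 4, 8],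
     [1, 7, 9, 10], [2, 4, 5, 9], [2, 8, 10, 11], [3, 5, 6, 10], [3, 9, 11, 12], [4, 6, 7, 11],
     [5, 7, 8, 12]]
    (by decide +kernel) (by decide +kernel) (by decide +kernel) (by decide +kernel)
    (by decide +kernel) (by decide +kernel) (by decide +kernel)

theorem one_mem_J3_thirteen : 1 ∈ J3 13 :=
  mem_J3_of_lists
    [[3, 4, 6, 12]]
    [[0, 1, 3, 9], [0, 2, 8, 12], [0, 4, 5, 7], [0, 6, 10, 11], [1, 2, 4, 10], [1, 5, 6, 8],
     [1, 7, 11, 12], [2, 3, 5, 11], [2, 6, 7, 9], [3, 7, 8, 10], [4, 8, 9, 11], [5, 9, 10, 12]]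
    [[0, 1, 4, 10], [0, 2, 3, 9], [0, 5, 6, 8], [0, 7, 11, 12], [1, 2, 6, 11], [1, 3, 5, 7],
     [1, 8, 9, 12], [2, 4, 7, 8], [2, 5, 10, 12], [3, 8, 10, 11], [4, 5, 9, 11], [6, 7, 9, 10]]
    [[0, 1, 11, 12], [0, 2, 3, 5], [0, 4, 8, 10], [0, 6, 7, 9], [1, 2, 6, 10], [1, 3, 7, 8],
     [1, 4, 5, 9], [2, 4, 7, 11], [2, 8, 9, 12], [3, 9, 10, 11], [5, 6, 8, 11], [5, 7, 10, 12]]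
    (by decide +kernel) (by decide +kernel) (by decide +kernel) (by decide +kernel)
    (by decide +kernel) (by decide +kernel) (by decide +kernel)

theorem three_mem_J3_thirteen : 3 ∈ J3 13 :=
  mem_J3_of_lists
    [[1, 5, 6, 8], [3, 4, 6, 12], [5, 9, 10, 12]]
    [[0, 1, 3, 9], [0, 2, 8, 12], [0, 4, 5, 7], [0, 6, 10, 11], [1, 2, 4, 10], [1, 7, 11, 12],
     [2, 3, 5, 11], [2, 6, 7, 9], [3, 7, 8, 10], [4, 8, 9, 11]]
    [[0, 1, 7, 12], [0, 2, 6, 10], [0, 3, 8, 9], [0, 4, 5, 11], [1, 2, 4, 9], [1, 3, 10, 11],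
     [2, 3, 5, 7], [2, 8, 11, 12], [4, 7, 8, 10], [6, 7, 9, 11]]
    [[0, 1, 2, 12], [0, 3, 5, 11], [0, 4, 8, 9], [0, 6, 7, 10], [1, 3, 7, 9], [1, 4, 10, 11],
     [2, 3, 8, 10], [2, 4, 5, 7], [2, 6, 9, 11], [7, 8, 11, 12]]
    (by decide +kernel) (by decide +kernel) (by decide +kernel) (by decide +kernel)
    (by decide +kernel) (by decide +kernel) (by decide +kernel)

theorem four_mem_J3_thirteen : 4 ∈ J3 13 :=
  mem_J3_of_lists
    [[0, 4, 5, 7], [1, 2, 4, 10], [3, 4, 6, 12], [4, 8, 9, 11]]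
    [[0, 1, 3, 9], [0, 2, 8, 12], [0, 6, 10, 11], [1, 5, 6, 8], [1, 7, 11, 12], [2, 3, 5, 11],
     [2, 6, 7, 9], [3, 7, 8, 10], [5, 9, 10, 12]]
    [[0, 1, 3, 8], [0, 2, 11, 12], [0, 6, 9, 10], [1, 5, 6, 11], [1, 7, 9, 12], [2, 3, 5, 9],
     [2, 6, 7, 8], [3, 7, 10, 11], [5, 8, 10, 12]]
    [[0, 1, 6, 11], [0, 2, 3, 8], [0, 9, 10, 12], [1, 3, 7, 9], [1, 5, 8, 12], [2, 5, 6, 9],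
     [2, 7, 11, 12], [3, 5, 10, 11], [6, 7, 8, 10]]
    (by decide +kernel) (by decide +kernel) (by decide +kernel) (by decide +kernel)
    (by decide +kernel) (by decide +kernel) (by decide +kernel)

theorem five_mem_J3_thirteen : 5 ∈ J3 13 :=
  mem_J3_of_lists
    [[0, 6, 10, 11], [1, 2, 4, 10], [3, 4, 6, 12], [3, 7, 8, 10], [5, 9, 10, 12]]
    [[0, 1, 3, 9], [0, 2, 8, 12], [0, 4, 5, 7], [1, 5, 6, 8], [1, 7, 11, 12], [2, 3, 5, 11],
     [2, 6, 7, 9], [4, 8, 9, 11]]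
    [[0, 1, 3, 5], [0, 2, 7, 12], [0, 4, 8, 9], [1, 6, 7, 9], [1, 8, 11, 12], [2, 3, 9, 11],
     [2, 5, 6, 8], [4, 5, 7, 11]]
    [[0, 1, 8, 12], [0, 2, 3, 5], [0, 4, 7, 9], [1, 3, 9, 11], [1, 5, 6, 7], [2, 6, 8, 9],
     [2, 7, 11, 12], [4, 5, 8, 11]]
    (by decide +kernel) (by decide +kernel) (by decide +kernel) (by decide +kernel)
    (by decide +kernel) (by decide +kernel) (by decide +kernel)

/-! ### Pairwise balanced designs with blocks of sizes 4 and 5 -/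

/-- The affine plane of order 4 with one parallel class extended by the point 16. -/
def pbd17 : List (List ℕ) :=
  [[0, 4, 8, 12, 16], [1, 5, 9, 13, 16], [2, 6, 10, 14, 16], [3, 7, 11, 15, 16], [0, 5, 10, 15],
   [1, 4, 11, 14], [2, 7, 8, 13], [3, 6, 9, 12], [0, 6, 11, 13], [1, 7, 10, 12], [2, 4, 9, 15],
   [3, 5, 8, 14], [0, 7, 9, 14], [1, 6, 8, 15], [2, 5, 11, 12], [3, 4, 10, 13], [0, 1, 2, 3],
   [4, 5, 6, 7], [8, 9, 10, 11], [12, 13, 14, 15]]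

/-- The transversal design `TD(4,5)` with blocks `{(c, x + ct) : c < 4}`, its groups, and the parallel
class `t = 0` extended by the point 20; `(c, x)` is written `5c + x`. -/
def pbd21 : List (List ℕ) :=
  [[0, 5, 10, 15, 20], [1, 6, 11, 16, 20], [2, 7, 12, 17, 20], [3, 8, 13, 18, 20],
   [4, 9, 14, 19, 20], [0, 6, 12, 18], [1, 7, 13, 19], [2, 8, 14, 15], [3, 9, 10, 16],
   [4, 5, 11, 17], [0, 7, 14, 16], [1, 8, 10, 17], [2, 9, 11, 18], [3, 5, 12, 19],
   [4, 6, 13, 15], [0, 8, 11, 19], [1, 9, 12, 15], [2, 5, 13, 16], [3, 6, 14, 17],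
   [4, 7, 10, 18], [0, 9, 13, 17], [1, 5, 14, 18], [2, 6, 10, 19], [3, 7, 11, 15],
   [4, 8, 12, 16], [0, 1, 2, 3, 4], [5, 6, 7, 8, 9], [10, 11, 12, 13, 14], [15, 16, 17, 18, 19]]

/-- A resolvable `S(2,4,28)` on `(3 × ℤ₉) ∪ {27}`, with one parallel class extended by the point 28;
`(c, x)` is written `9c + x`. The nine parallel classes, of seven blocks each, are the
`ℤ₉`-translates of the first one (28 omitted). -/
def pbd29 : List (List ℕ) :=
  [[0, 9, 18, 27, 28], [1, 3, 6, 14, 28], [2, 21, 22, 24, 28], [4, 5, 11, 19, 28],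
   [8, 13, 20, 25, 28], [7, 10, 17, 23, 28], [12, 15, 16, 26, 28], [1, 10, 19, 27],
   [2, 4, 7, 15], [3, 22, 23, 25], [5, 6, 12, 20], [0, 14, 21, 26], [8, 9, 11, 24],
   [13, 16, 17, 18], [2, 11, 20, 27], [3, 5, 8, 16], [4, 23, 24, 26], [6, 7, 13, 21],
   [1, 15, 18, 22], [0, 10, 12, 25], [9, 14, 17, 19], [3, 12, 21, 27], [0, 4, 6, 17],
   [5, 18, 24, 25], [7, 8, 14, 22], [2, 16, 19, 23], [1, 11, 13, 26], [9, 10, 15, 20],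
   [4, 13, 22, 27], [1, 5, 7, 9], [6, 19, 25, 26], [0, 8, 15, 23], [3, 17, 20, 24],
   [2, 12, 14, 18], [10, 11, 16, 21], [5, 14, 23, 27], [2, 6, 8, 10], [7, 18, 20, 26],
   [0, 1, 16, 24], [4, 9, 21, 25], [3, 13, 15, 19], [11, 12, 17, 22], [6, 15, 24, 27],
   [0, 3, 7, 11], [8, 18, 19, 21], [1, 2, 17, 25], [5, 10, 22, 26], [4, 14, 16, 20],
   [9, 12, 13, 23], [7, 16, 25, 27], [1, 4, 8, 12], [0, 19, 20, 22], [2, 3, 9, 26],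
   [6, 11, 18, 23], [5, 15, 17, 21], [10, 13, 14, 24], [8, 17, 26, 27], [0, 2, 5, 13],
   [1, 20, 21, 23], [3, 4, 10, 18], [7, 12, 19, 24], [6, 9, 16, 22], [11, 14, 15, 25]]

/-- The resolvable `S(2,4,28)` of `pbd29` with five of its parallel classes extended by the points
28, ..., 32, and these five points as a block. -/
def pbd33 : List (List ℕ) :=
  [[0, 9, 18, 27, 28], [1, 3, 6, 14, 28], [2, 21, 22, 24, 28], [4, 5, 11, 19, 28],
   [8, 13, 20, 25, 28], [7, 10, 17, 23, 28], [12, 15, 16, 26, 28], [1, 10, 19, 27, 29],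
   [2, 4, 7, 15, 29], [3, 22, 23, 25, 29], [5, 6, 12, 20, 29], [0, 14, 21, 26, 29],
   [8, 9, 11, 24, 29], [13, 16, 17, 18, 29], [2, 11, 20, 27, 30], [3, 5, 8, 16, 30],
   [4, 23, 24, 26, 30], [6, 7, 13, 21, 30], [1, 15, 18, 22, 30], [0, 10, 12, 25, 30],
   [9, 14, 17, 19, 30], [3, 12, 21, 27, 31], [0, 4, 6, 17, 31], [5, 18, 24, 25, 31],
   [7, 8, 14, 22, 31], [2, 16, 19, 23, 31], [1, 11, 13, 26, 31], [9, 10, 15, 20, 31],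
   [4, 13, 22, 27, 32], [1, 5, 7, 9, 32], [6, 19, 25, 26, 32], [0, 8, 15, 23, 32],
   [3, 17, 20, 24, 32], [2, 12, 14, 18, 32], [10, 11, 16, 21, 32], [5, 14, 23, 27],
   [2, 6, 8, 10], [7, 18, 20, 26], [0, 1, 16, 24], [4, 9, 21, 25], [3, 13, 15, 19],
   [11, 12, 17, 22], [6, 15, 24, 27], [0, 3, 7, 11], [8, 18, 19, 21], [1, 2, 17, 25],
   [5, 10, 22, 26], [4, 14, 16, 20], [9, 12, 13, 23], [7, 16, 25, 27], [1, 4, 8, 12],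
   [0, 19, 20, 22], [2, 3, 9, 26], [6, 11, 18, 23], [5, 15, 17, 21], [10, 13, 14, 24],
   [8, 17, 26, 27], [0, 2, 5, 13], [1, 20, 21, 23], [3, 4, 10, 18], [7, 12, 19, 24],
   [6, 9, 16, 22], [11, 14, 15, 25], [28, 29, 30, 31, 32]]

/-- The `S(2,4,37)` developed from the difference family `{0, 1, 3, 24}`, `{0, 4, 26, 32}`,
`{0, 10, 18, 30}` in `ℤ₃₇`. -/
def pbd37 : List (List ℕ) :=
  [[0, 1, 3, 24], [1, 2, 4, 25], [2, 3, 5, 26], [3, 4, 6, 27], [4, 5, 7, 28], [5, 6, 8, 29],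
   [6, 7, 9, 30], [7, 8, 10, 31], [8, 9, 11, 32], [9, 10, 12, 33], [10, 11, 13, 34],
   [11, 12, 14, 35], [12, 13, 15, 36], [0, 13, 14, 16], [1, 14, 15, 17], [2, 15, 16, 18],
   [3, 16, 17, 19], [4, 17, 18, 20], [5, 18, 19, 21], [6, 19, 20, 22], [7, 20, 21, 23],
   [8, 21, 22, 24], [9, 22, 23, 25], [10, 23, 24, 26], [11, 24, 25, 27], [12, 25, 26, 28],
   [13, 26, 27, 29], [14, 27, 28, 30], [15, 28, 29, 31], [16, 29, 30, 32], [17, 30, 31, 33],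
   [18, 31, 32, 34], [19, 32, 33, 35], [20, 33, 34, 36], [0, 21, 34, 35], [1, 22, 35, 36],
   [0, 2, 23, 36], [0, 4, 26, 32], [1, 5, 27, 33], [2, 6, 28, 34], [3, 7, 29, 35],
   [4, 8, 30, 36], [0, 5, 9, 31], [1, 6, 10, 32], [2, 7, 11, 33], [3, 8, 12, 34], [4, 9, 13, 35],
   [5, 10, 14, 36], [0, 6, 11, 15], [1, 7, 12, 16], [2, 8, 13, 17], [3, 9, 14, 18],
   [4, 10, 15, 19], [5, 11, 16, 20], [6, 12, 17, 21], [7, 13, 18, 22], [8, 14, 19, 23],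
   [9, 15, 20, 24], [10, 16, 21, 25], [11, 17, 22, 26], [12, 18, 23, 27], [13, 19, 24, 28],
   [14, 20, 25, 29], [15, 21, 26, 30], [16, 22, 27, 31], [17, 23, 28, 32], [18, 24, 29, 33],
   [19, 25, 30, 34], [20, 26, 31, 35], [21, 27, 32, 36], [0, 22, 28, 33], [1, 23, 29, 34],
   [2, 24, 30, 35], [3, 25, 31, 36], [0, 10, 18, 30], [1, 11, 19, 31], [2, 12, 20, 32],
   [3, 13, 21, 33], [4, 14, 22, 34], [5, 15, 23, 35], [6, 16, 24, 36], [0, 7, 17, 25],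
   [1, 8, 18, 26], [2, 9, 19, 27], [3, 10, 20, 28], [4, 11, 21, 29], [5, 12, 22, 30],
   [6, 13, 23, 31], [7, 14, 24, 32], [8, 15, 25, 33], [9, 16, 26, 34], [10, 17, 27, 35],
   [11, 18, 28, 36], [0, 12, 19, 29], [1, 13, 20, 30], [2, 14, 21, 31], [3, 15, 22, 32],
   [4, 16, 23, 33], [5, 17, 24, 34], [6, 18, 25, 35], [7, 19, 26, 36], [0, 8, 20, 27],
   [1, 9, 21, 28], [2, 10, 22, 29], [3, 11, 23, 30], [4, 12, 24, 31], [5, 13, 25, 32],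
   [6, 14, 26, 33], [7, 15, 27, 34], [8, 16, 28, 35], [9, 17, 29, 36]]

/-- `flower_of_pbd` for a pairwise balanced design given by a list, with `a' = 0`. -/
theorem mem_J3_of_pbd_list (w : ℕ) (L : List (List ℕ)) (A A' : List ℕ)
    (hL : IsBlockList w L) (hN : L.Nodup) (h45 : ∀ l ∈ L, l.length = 4 ∨ l.length = 5)
    (hp : PairsCovered w (fun _ _ => true) L)
    (hA : (A ∈ L ∧ A' ∈ L) ∧ (A.length = 4 ∧ A'.length = 4) ∧ ∀ x ∈ A, x ∉ A')
    {a k : ℕ} (ha : a ∈ J3 13)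
    (hk : k + 18 = a + (L.map fun l => gddBlocks l.length).sum + (w - 8)) :
    k ∈ J3 (3 * w + 1) := by
  obtain ⟨⟨hAL, hAL'⟩, ⟨hA4, hA4'⟩, hd⟩ := hA
  have hne : A' ≠ A := by
    rintro rfl
    obtain ⟨x, hx⟩ := List.exists_mem_of_length_pos (by omega : 0 < A'.length)
    exact hd x hx hx
  have hf := flower_of_pbd (w := w) L.toFinset (listBlock w)
    (fun l hl => by
      rw [hL.card_listBlock (List.mem_toFinset.mp hl)]
      exact h45 l (List.mem_toFinset.mp hl))
    (fun x y hxy => by simpa using hp.existsUnique hxy rfl)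
    (List.mem_toFinset.mpr hAL) (List.mem_toFinset.mpr hAL')
    ((hL.card_listBlock hAL).trans hA4) ((hL.card_listBlock hAL').trans hA4')
    (by
      rw [Finset.disjoint_left]
      exact fun x hx hx' => hd x (mem_listBlock.mp hx) (mem_listBlock.mp hx'))
    ha zero_mem_J3_thirteen
  have hsum : ∑ l ∈ L.toFinset, gddBlocks (listBlock w l).card =
      (L.map fun l => gddBlocks l.length).sum := by
    rw [List.sum_toFinset _ hN]
    congr 1
    exact List.map_congr_left fun l hl => by rw [hL.card_listBlock hl]
  rw [← Finset.add_sum_erase _ _ (List.mem_toFinset.mpr hAL),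
    ← Finset.add_sum_erase _ _ (Finset.mem_erase.mpr ⟨hne, List.mem_toFinset.mpr hAL'⟩),
    hL.card_listBlock hAL, hL.card_listBlock hAL', hA4, hA4',
    show gddBlocks 4 = 9 from rfl] at hsum
  have hcard : Fintype.card (Option (Fin w × Fin 3)) = 3 * w + 1 := by simp; omega
  have := hf.top_of_equiv (Fintype.equivFinOfCardEq hcard)
  rw [mem_J3_iff]
  convert this using 1
  omega

theorem mem_J3_52 {a : ℕ} (ha : a ∈ J3 13) : 195 + a ∈ J3 52 :=
  mem_J3_of_pbd_list 17 pbd17 [0, 5, 10, 15] [1, 4, 11, 14] (by decide +kernel) (by decide +kernel)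
    (by decide +kernel) (by decide +kernel) (by decide +kernel) ha (by
      have h : (pbd17.map fun l => gddBlocks l.length).sum = 204 := by decide +kernel
      rw [h]
      omega)

theorem mem_J3_64 {a : ℕ} (ha : a ∈ J3 13) : 310 + a ∈ J3 64 :=
  mem_J3_of_pbd_list 21 pbd21 [0, 6, 12, 18] [1, 7, 13, 19] (by decide +kernel) (by decide +kernel)
    (by decide +kernel) (by decide +kernel) (by decide +kernel) ha (by
      have h : (pbd21.map fun l => gddBlocks l.length).sum = 315 := by decide +kernel
      rw [h]
      omega)

theorem mem_J3_88 {a : ℕ} (ha : a ∈ J3 13) : 612 + a ∈ J3 88 :=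
  mem_J3_of_pbd_list 29 pbd29 [1, 10, 19, 27] [2, 4, 7, 15] (by decide +kernel) (by decide +kernel)
    (by decide +kernel) (by decide +kernel) (by decide +kernel) ha (by
      have h : (pbd29.map fun l => gddBlocks l.length).sum = 609 := by decide +kernel
      rw [h]
      omega)

theorem mem_J3_100 {a : ℕ} (ha : a ∈ J3 13) : 799 + a ∈ J3 100 :=
  mem_J3_of_pbd_list 33 pbd33 [5, 14, 23, 27] [2, 6, 8, 10] (by decide +kernel) (by decide +kernel)
    (by decide +kernel) (by decide +kernel) (by decide +kernel) ha (by
      have h : (pbd33.map fun l => gddBlocks l.length).sum = 792 := by decide +kernel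
      rw [h]
      omega)

theorem mem_J3_112 {a : ℕ} (ha : a ∈ J3 13) : 1010 + a ∈ J3 112 :=
  mem_J3_of_pbd_list 37 pbd37 [0, 1, 3, 24] [4, 5, 7, 28] (by decide +kernel) (by decide +kernel)
    (by decide +kernel) (by decide +kernel) (by decide +kernel) ha (by
      have h : (pbd37.map fun l => gddBlocks l.length).sum = 999 := by decide +kernel
      rw [h]
      omega)

/-- (i) for `v ∈ {52, 64}`,
`{b_v-21, b_v-22, b_v-23, b_v-25} ⊆ J_3[v]`; (ii) for `v ∈ {88, 100, 112}`,
`{b_v-22, b_v-23, b_v-25} ⊆ J_3[v]`. -/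
theorem stmt16 :
    (∀ v ∈ ({52, 64} : Set ℕ),
      ({steinerBlockCount v - 21, steinerBlockCount v - 22, steinerBlockCount v - 23,
        steinerBlockCount v - 25} : Set ℕ) ⊆ J3 v) ∧
    (∀ v ∈ ({88, 100, 112} : Set ℕ),
      ({steinerBlockCount v - 22, steinerBlockCount v - 23,
        steinerBlockCount v - 25} : Set ℕ) ⊆ J3 v) := by
  constructor
  · rintro v (rfl | rfl) k (rfl | rfl | rfl | rfl)
    · exact mem_J3_52 five_mem_J3_thirteen
    · exact mem_J3_52 four_mem_J3_thirteen
    · exact mem_J3_52 three_mem_J3_thirteen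
    · exact mem_J3_52 one_mem_J3_thirteen
    · exact mem_J3_64 five_mem_J3_thirteen
    · exact mem_J3_64 four_mem_J3_thirteen
    · exact mem_J3_64 three_mem_J3_thirteen
    · exact mem_J3_64 one_mem_J3_thirteen
  · rintro v (rfl | rfl | rfl) k (rfl | rfl | rfl)
    · exact mem_J3_88 four_mem_J3_thirteen
    · exact mem_J3_88 three_mem_J3_thirteen
    · exact mem_J3_88 one_mem_J3_thirteen
    · exact mem_J3_100 four_mem_J3_thirteen
    · exact mem_J3_100 three_mem_J3_thirteen
    · exact mem_J3_100 one_mem_J3_thirteen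
    · exact mem_J3_112 four_mem_J3_thirteen
    · exact mem_J3_112 three_mem_J3_thirteen
    · exact mem_J3_112 one_mem_J3_thirteen
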